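/- arXiv:2206.09139 — 10 statements merged into one kernel-verified Lean document; each statement's English description precedes it below -/
import Mathlib

section
/- Let M_a ⊆ F_a × F × E_a × E and M_b ⊆ F_b × F × E_b × E be monotone relations. Then their composition M_a ⇄ M_b ⊆ F_a × F_b × E_a × E_b is a monotone relation. -/
/-- The duality pairing (standard inner product) between an effort vector `e`
and a flow vector `f` in `ℝ^n`. -/
noncomputable def dot {n : ℕ} (e f : Fin n → ℝ) : ℝ := ∑ i, e i * f i

/-- A relation `M ⊆ F₁ × F₂ × E₁ × E₂` (flows `(f₁,f₂)`, efforts `(e₁,e₂)`) is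
monotone if `⟨e − e', f − f'⟩ ≥ 0` for all pairs of its elements, where the
pairing on the product space is the sum of the pairings of the factors. -/
def Mono4 {n1 n2 : ℕ}
    (M : Set ((Fin n1 → ℝ) × (Fin n2 → ℝ) × (Fin n1 → ℝ) × (Fin n2 → ℝ))) : Prop :=
  ∀ f1 f2 e1 e2 f1' f2' e1' e2',
    (f1, f2, e1, e2) ∈ M → (f1', f2', e1', e2') ∈ M →
    0 ≤ dot (e1 - e1') (f1 - f1') + dot (e2 - e2') (f2 - f2')

/-- The composition `M_a ⇄ M_b` of two relations
`M_a ⊆ F_a × F × E_a × E` and `M_b ⊆ F_b × F × E_b × E` through the shared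
port `(F, E)` via the interconnection `f ↦ −f`, `e ↦ e`. -/
def RelComp {na nb n : ℕ}
    (Ma : Set ((Fin na → ℝ) × (Fin n → ℝ) × (Fin na → ℝ) × (Fin n → ℝ)))
    (Mb : Set ((Fin nb → ℝ) × (Fin n → ℝ) × (Fin nb → ℝ) × (Fin n → ℝ))) :
    Set ((Fin na → ℝ) × (Fin nb → ℝ) × (Fin na → ℝ) × (Fin nb → ℝ)) :=
  {p | ∃ f e, (p.1, f, p.2.2.1, e) ∈ Ma ∧ (p.2.1, -f, p.2.2.2, e) ∈ Mb}

/-- The composition of two monotone relations is monotone. -/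
theorem monotone_relComp {na nb n : ℕ}
    (Ma : Set ((Fin na → ℝ) × (Fin n → ℝ) × (Fin na → ℝ) × (Fin n → ℝ)))
    (Mb : Set ((Fin nb → ℝ) × (Fin n → ℝ) × (Fin nb → ℝ) × (Fin n → ℝ)))
    (hMa : Mono4 Ma) (hMb : Mono4 Mb) :
    Mono4 (RelComp Ma Mb) := by
  rintro fa fb ea eb fa' fb' ea' eb' ⟨f, e, h1, h2⟩ ⟨f', e', h1', h2'⟩
  have ha := hMa _ _ _ _ _ _ _ _ h1 h1'
  have hb := hMb _ _ _ _ _ _ _ _ h2 h2'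
  have key : dot (e - e') (-f - -f') = - dot (e - e') (f - f') := by
    unfold dot
    rw [← Finset.sum_neg_distrib]
    refine Finset.sum_congr rfl fun i _ => ?_
    simp only [Pi.sub_apply, Pi.neg_apply]
    ring
  rw [key] at hb
  dsimp only at ha hb
  linarith
end

section
/- Let M_a ⊆ F_a × F × E_a × E and M_b ⊆ F_b × F × E_b × E be cyclically monotone relations. Then their composition M_a ⇄ M_b ⊆ F_a × F_b × E_a × E_b is a cyclically monotone relation. -/
/-- A relation `M ⊆ F₁ × F₂ × E₁ × E₂` (flows `(f₁,f₂)`, efforts `(e₁,e₂)`) is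
cyclically monotone if for every `m ≥ 1` and all elements
`(f₀,e₀), …, (f_m,e_m)` of `M` (with indices taken cyclically, i.e. the
`(m+1)`-st flow equals the `0`-th) one has
`∑ᵢ ⟨eᵢ, fᵢ − fᵢ₊₁⟩ ≥ 0`, the pairing on the product space being the sum of
the pairings of the factors. -/
def CycMono4 {n1 n2 : ℕ}
    (M : Set ((Fin n1 → ℝ) × (Fin n2 → ℝ) × (Fin n1 → ℝ) × (Fin n2 → ℝ))) : Prop :=
  ∀ m : ℕ, 1 ≤ m → ∀ (f1 : ℕ → Fin n1 → ℝ) (f2 : ℕ → Fin n2 → ℝ)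
    (e1 : ℕ → Fin n1 → ℝ) (e2 : ℕ → Fin n2 → ℝ),
    (∀ i ≤ m, (f1 i, f2 i, e1 i, e2 i) ∈ M) →
    f1 (m + 1) = f1 0 → f2 (m + 1) = f2 0 →
    0 ≤ ∑ i ∈ Finset.range (m + 1),
        (dot (e1 i) (f1 i - f1 (i + 1)) + dot (e2 i) (f2 i - f2 (i + 1)))

/-- The composition of two cyclically monotone relations is cyclically monotone. -/
theorem cyclicallyMonotone_relComp {na nb n : ℕ}
    (Ma : Set ((Fin na → ℝ) × (Fin n → ℝ) × (Fin na → ℝ) × (Fin n → ℝ)))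
    (Mb : Set ((Fin nb → ℝ) × (Fin n → ℝ) × (Fin nb → ℝ) × (Fin n → ℝ)))
    (hMa : CycMono4 Ma) (hMb : CycMono4 Mb) :
    CycMono4 (RelComp Ma Mb) := by
  intro m hm fa fb ea eb h ha hb
  choose! f e hA hB using h
  have key : ∀ x : ℕ → Fin n → ℝ, ∃ g : ℕ → Fin n → ℝ,
      (∀ i ≤ m, g i = x i) ∧ g (m + 1) = g 0 := by
    intro x
    refine ⟨fun i => if i ≤ m then x i else x 0, ?_, ?_⟩
    · intro i hi
      simp [hi]
    · simp
  obtain ⟨g, hg, hg0⟩ := key f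
  have h1 := hMa m hm fa g ea e (fun i hi => by rw [hg i hi]; exact hA i hi) ha hg0
  have h2 := hMb m hm fb (fun i => - g i) eb e
    (fun i hi => by simp only [hg i hi]; exact hB i hi) hb (by simp only [hg0])
  have h3 := add_nonneg h1 h2
  rw [← Finset.sum_add_distrib] at h3
  refine h3.trans_eq (Finset.sum_congr rfl fun i _ => ?_)
  have h4 : dot (e i) (-g i - -g (i + 1)) = - dot (e i) (g i - g (i + 1)) := by
    unfold dot
    rw [← Finset.sum_neg_distrib]
    refine Finset.sum_congr rfl fun j _ => ?_
    simp only [Pi.sub_apply, Pi.neg_apply]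
    ring
  rw [h4]
  ring
end

section
/- Let M_a ⊆ F_a × F × E_a × E and M_b ⊆ F_b × F × E_b × E be maximal monotone relations. Define C_f = Π(M_a, F) × Π(M_b, F) ⊆ F × F and C_e = {(e₁,e₂) ∈ E × E : there exists f ∈ F with (f,e₁) ∈ Π(M_a, F × E) and (−f, e₂) ∈ Π(M_b, F × E)}; these sets are nearly convex. If there exist f̄ ∈ F and ē ∈ E with (f̄, −f̄) ∈ rint C_f and (ē, ē) ∈ rint C_e, then the composition M_a ⇄ M_b ⊆ F_a × F_b × E_a × E_b is a maximal monotone relation. -/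
/-- Maximal monotone relation: monotone and not properly contained in any
other monotone relation. -/
def MaxMono4 {n1 n2 : ℕ}
    (M : Set ((Fin n1 → ℝ) × (Fin n2 → ℝ) × (Fin n1 → ℝ) × (Fin n2 → ℝ))) : Prop :=
  Mono4 M ∧ ∀ M', Mono4 M' → M ⊆ M' → M' = M

/-- Relative interior `rint S := rint (cl S)` of a (nearly convex) set,
formalized as the intrinsic interior of the closure. -/
noncomputable def rint {V : Type*} [AddCommGroup V] [Module ℝ V] [TopologicalSpace V]
    (S : Set V) : Set V :=
  intrinsicInterior ℝ (closure S)


structure Pairing (V : Type*) [NormedAddCommGroup V] [NormedSpace ℝ V] where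
  B : V →ₗ[ℝ] V →ₗ[ℝ] ℝ
  symm : ∀ x y, B x y = B y x
  pos : ∀ x, ‖x‖ ^ 2 ≤ B x x

namespace Pairing

variable {V X U : Type*} [NormedAddCommGroup V] [NormedSpace ℝ V]
  [NormedAddCommGroup X] [NormedSpace ℝ X] [NormedAddCommGroup U] [NormedSpace ℝ U]

theorem nonneg (P : Pairing V) (x : V) : 0 ≤ P.B x x := le_trans (sq_nonneg _) (P.pos x)

theorem tendsto [FiniteDimensional ℝ V] (P : Pairing V) {α : Type*} {l : Filter α}
    {f g : α → V} {a b : V} (hf : Filter.Tendsto f l (nhds a))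
    (hg : Filter.Tendsto g l (nhds b)) :
    Filter.Tendsto (fun k => P.B (f k) (g k)) l (nhds (P.B a b)) := by
  let Bc : V →L[ℝ] V →L[ℝ] ℝ :=
    LinearMap.toContinuousLinearMap
      ((LinearMap.toContinuousLinearMap (𝕜 := ℝ) (E := V) (F' := ℝ)).toLinearMap ∘ₗ P.B)
  have h : Continuous (fun p : V × V => Bc p.1 p.2) := by fun_prop
  exact (h.tendsto (a, b)).comp (hf.prodMk_nhds hg)

theorem cont [FiniteDimensional ℝ V] (P : Pairing V) {α : Type*} [TopologicalSpace α]
    {f g : α → V} (hf : Continuous f) (hg : Continuous g) :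
    Continuous (fun k => P.B (f k) (g k)) :=
  continuous_iff_continuousAt.2 fun _ => P.tendsto hf.continuousAt hg.continuousAt

def prod (P : Pairing X) (Q : Pairing U) : Pairing (X × U) where
  B := P.B.compl₁₂ (LinearMap.fst ℝ X U) (LinearMap.fst ℝ X U) +
       Q.B.compl₁₂ (LinearMap.snd ℝ X U) (LinearMap.snd ℝ X U)
  symm := by
    intro x y
    simp [P.symm x.1 y.1, Q.symm x.2 y.2]
  pos := by
    intro x
    simp only [LinearMap.add_apply, LinearMap.compl₁₂_apply, LinearMap.fst_apply,
      LinearMap.snd_apply]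
    have h1 := P.pos x.1
    have h2 := Q.pos x.2
    rw [Prod.norm_def]
    rcases max_cases ‖x.1‖ ‖x.2‖ with ⟨h, _⟩ | ⟨h, _⟩ <;> rw [h] <;>
      nlinarith [sq_nonneg ‖x.1‖, sq_nonneg ‖x.2‖]

@[simp] theorem prod_B (P : Pairing X) (Q : Pairing U) (x y : X × U) :
    (P.prod Q).B x y = P.B x.1 y.1 + Q.B x.2 y.2 := by
  simp [prod]

def Mono (P : Pairing V) (M : Set (V × V)) : Prop :=
  ∀ p ∈ M, ∀ q ∈ M, 0 ≤ P.B (p.2 - q.2) (p.1 - q.1)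

def Max (P : Pairing V) (M : Set (V × V)) : Prop :=
  P.Mono M ∧ ∀ p, (∀ q ∈ M, 0 ≤ P.B (p.2 - q.2) (p.1 - q.1)) → p ∈ M

theorem finite_feas (P : Pairing V) {ι : Type*} [Fintype ι] (q : ι → V × V)
    (hq : ∀ i j, 0 ≤ P.B ((q i).2 - (q j).2) ((q i).1 - (q j).1))
    (ε : ι → ℝ) (hε : ∀ i, 0 < ε i) (z : V) (D : V →ₗ[ℝ] V) (hD : ∀ y, 0 ≤ P.B (D y) y) :
    ∃ y, ∀ i, - ε i < P.B ((q i).2 - z + D y) ((q i).1 - y) := by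
  classical
  let g : ι → V → ℝ := fun i y => P.B ((q i).2 - z + D y) ((q i).1 - y)
  let A : Set (ι → ℝ) := {t | ∃ y, ∀ i, t i < g i y + ε i}
  by_contra hcon
  have h0 : (0 : ι → ℝ) ∉ A := by
    rintro ⟨y, hy⟩
    exact hcon ⟨y, fun i => by have := hy i; simp only [Pi.zero_apply, g] at this; linarith⟩
  have hAo : IsOpen A := by
    have : A = ⋃ y, ⋂ i, {t : ι → ℝ | t i < g i y + ε i} := by
      ext t; simp [A]
    rw [this]
    refine isOpen_iUnion fun y => isOpen_iInter_of_finite fun i => ?_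
    exact isOpen_lt (continuous_apply i) continuous_const
  have hAc : Convex ℝ A := by
    rintro t ⟨y, hy⟩ t' ⟨y', hy'⟩ a b ha hb hab
    refine ⟨a • y + b • y', fun i => ?_⟩
    have hconc : a * g i y + b * g i y' ≤ g i (a • y + b • y') := by
      have hd := hD (y - y')
      have : g i (a • y + b • y') - (a * g i y + b * g i y')
          = a * b * P.B (D (y - y')) (y - y') := by
        obtain rfl : b = 1 - a := by linarith
        simp only [g, map_sub, map_add, map_smul, LinearMap.sub_apply, LinearMap.add_apply,
          LinearMap.smul_apply, smul_eq_mul]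
        ring
      nlinarith [mul_nonneg (mul_nonneg ha hb) hd]
    have h1 := hy i
    have h2 := hy' i
    simp only [Pi.add_apply, Pi.smul_apply, smul_eq_mul]
    obtain rfl : b = 1 - a := by linarith
    rcases ha.eq_or_lt with rfl | ha'
    · simp at *; linarith
    · nlinarith [mul_lt_mul_of_pos_left h1 ha', mul_le_mul_of_nonneg_left h2.le hb]
  obtain ⟨f, hf⟩ := geometric_hahn_banach_open_point hAc hAo h0
  let μ : ι → ℝ := fun i => f (Pi.single i 1)
  have hfe : ∀ t, f t = ∑ i, t i * μ i := by
    intro t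
    conv_lhs => rw [pi_eq_sum_univ' t]
    simp [μ, map_sum, Pi.single]
  rw [map_zero] at hf
  have hμ : ∀ i, 0 ≤ μ i := by
    intro i
    by_contra hneg
    push Not at hneg
    -- t = base - s e_i
    have hA0 : ∀ s : ℝ, 0 ≤ s → (fun j => g j 0 - s * (Pi.single i 1 : ι → ℝ) j) ∈ A := by
      intro s hs
      refine ⟨0, fun j => ?_⟩
      have : 0 ≤ (Pi.single i 1 : ι → ℝ) j := by
        by_cases h : j = i
        · subst h; simp
        · simp [h]
      nlinarith [hε j, mul_nonneg hs this]
    have key : ∀ s : ℝ, 0 ≤ s → (∑ j, g j 0 * μ j) - s * μ i < 0 := by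
      intro s hs
      have := hf _ (hA0 s hs)
      rw [hfe] at this
      simpa [sub_mul, Finset.sum_sub_distrib, Pi.single_apply] using this
    have := key (|∑ j, g j 0 * μ j| / (-μ i)) (div_nonneg (abs_nonneg _) (by linarith))
    have h2 : |∑ j, g j 0 * μ j| / (-μ i) * μ i = - |∑ j, g j 0 * μ j| := by
      rw [div_neg, neg_mul, div_mul_cancel₀ _ hneg.ne]
    rw [h2] at this
    linarith [neg_abs_le (∑ j, g j 0 * μ j)]
  have hs : 0 < ∑ i, μ i := by
    rcases (Finset.sum_nonneg fun i _ => hμ i).eq_or_lt with h | h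
    · exfalso
      have hz : ∀ i, μ i = 0 := by
        intro i
        exact (Finset.sum_eq_zero_iff_of_nonneg (fun i _ => hμ i)).1 h.symm i (Finset.mem_univ i)
      have := hf (fun j => g j 0) ⟨0, fun j => by linarith [hε j]⟩
      rw [hfe] at this
      simp [hz] at this
    · exact h
  set s := ∑ i, μ i
  let ν : ι → ℝ := fun i => μ i / s
  have hν : ∀ i, 0 ≤ ν i := fun i => div_nonneg (hμ i) hs.le
  have hν1 : ∑ i, ν i = 1 := by
    simp only [ν, ← Finset.sum_div]; exact div_self hs.ne'
  let y : V := ∑ i, ν i • (q i).1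
  have hy0 : ∀ w, ∑ i, ν i * P.B w ((q i).1 - y) = 0 := by
    intro w
    have : ∑ i, ν i * P.B w ((q i).1 - y) = P.B w (∑ i, ν i • ((q i).1 - y)) := by
      simp [map_sum]
    rw [this]
    have : ∑ i, ν i • ((q i).1 - y) = 0 := by
      simp only [smul_sub, Finset.sum_sub_distrib, ← Finset.sum_smul, hν1, one_smul]
      simp [y]
    rw [this, map_zero]
  have hyi : ∀ w i, P.B w ((q i).1 - y) = ∑ j, ν j * P.B w ((q i).1 - (q j).1) := by
    intro w i
    have : (q i).1 - y = ∑ j, ν j • ((q i).1 - (q j).1) := by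
      simp only [smul_sub, Finset.sum_sub_distrib, ← Finset.sum_smul, hν1, one_smul]
      simp [y]
    rw [this]; simp [map_sum]
  have hkey : 0 ≤ ∑ i, ν i * g i y := by
    have e1 : ∑ i, ν i * g i y = ∑ i, ν i * P.B (q i).2 ((q i).1 - y) := by
      have := hy0 (D y - z)
      rw [← add_zero (∑ i, ν i * P.B (q i).2 ((q i).1 - y)), ← this, ← Finset.sum_add_distrib]
      refine Finset.sum_congr rfl fun i _ => ?_
      simp only [g, map_sub, map_add, LinearMap.sub_apply, LinearMap.add_apply]
      ring
    rw [e1]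
    simp only [hyi, Finset.mul_sum]
    set T := ∑ i, ∑ j, ν i * (ν j * P.B (q i).2 ((q i).1 - (q j).1)) with hT
    have hT2 : T = ∑ i, ∑ j, ν j * (ν i * P.B (q j).2 ((q j).1 - (q i).1)) := by
      rw [hT, Finset.sum_comm]
    have : T + T = ∑ i, ∑ j, ν i * ν j * P.B ((q i).2 - (q j).2) ((q i).1 - (q j).1) := by
      nth_rw 2 [hT2]
      rw [hT, ← Finset.sum_add_distrib]
      refine Finset.sum_congr rfl fun i _ => ?_
      rw [← Finset.sum_add_distrib]
      refine Finset.sum_congr rfl fun j _ => ?_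
      simp only [map_sub, LinearMap.sub_apply]
      ring
    have h0 : 0 ≤ T + T := by
      rw [this]
      exact Finset.sum_nonneg fun i _ => Finset.sum_nonneg fun j _ =>
        mul_nonneg (mul_nonneg (hν i) (hν j)) (hq i j)
    linarith
  have hμg : 0 ≤ ∑ i, g i y * μ i := by
    have : ∑ i, g i y * μ i = s * ∑ i, ν i * g i y := by
      rw [Finset.mul_sum]
      refine Finset.sum_congr rfl fun i _ => ?_
      simp only [ν]; field_simp
    rw [this]; exact mul_nonneg hs.le hkey
  have := hf (fun i => g i y) ⟨y, fun i => by linarith [hε i]⟩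
  rw [hfe] at this
  linarith

theorem minty [FiniteDimensional ℝ V] (P : Pairing V) {M : Set (V × V)} (hM : P.Max M)
    (z : V) (D : V →ₗ[ℝ] V) (c : ℝ) (hc : 0 < c) (hD : ∀ y, c * ‖y‖ ^ 2 ≤ P.B (D y) y) :
    ∃ y, (y, z - D y) ∈ M := by
  classical
  have hDn : ∀ y, 0 ≤ P.B (D y) y := fun y => le_trans (by positivity) (hD y)
  have hDc : Continuous D := D.continuous_of_finiteDimensional
  rcases M.eq_empty_or_nonempty with he | ⟨q0, hq0⟩
  · exact ⟨0, hM.2 _ (by simp [he])⟩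
  let g : V × V → V → ℝ := fun q y => P.B (q.2 - z + D y) (q.1 - y)
  have hg : ∀ q, Continuous (g q) := fun q => P.cont (by fun_prop) (by fun_prop)
  let t : M × {e : ℝ // 0 < e} → Set V := fun i => {y | -i.2.1 ≤ g i.1.1 y}
  have ht : ∀ i, IsClosed (t i) := fun i => isClosed_le continuous_const (hg _)
  have hcomp : IsCompact (t (⟨q0, hq0⟩, ⟨1, one_pos⟩)) := by
    refine Metric.isCompact_of_isClosed_isBounded (ht _) ?_
    let L : V →ₗ[ℝ] ℝ := (P.B.flip q0.1) ∘ₗ D - P.B (q0.2 - z)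
    let Lc := LinearMap.toContinuousLinearMap L
    have hL : ∀ y, |L y| ≤ ‖Lc‖ * ‖y‖ := fun y => Lc.le_opNorm y
    let a := P.B (q0.2 - z) q0.1
    refine (Metric.isBounded_closedBall (x := (0 : V)) (r := (‖Lc‖ + |a| + 1) / c + 1)).subset ?_
    intro y hy
    rw [mem_closedBall_zero_iff]
    have h1 : -1 ≤ g q0 y := hy
    have h2 : g q0 y = a + L y - P.B (D y) y := by
      simp only [g, a, L, map_sub, map_add, LinearMap.sub_apply, LinearMap.add_apply,
        LinearMap.comp_apply, LinearMap.flip_apply]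
      ring
    have h3 := hD y
    have h4 := (abs_le.1 (hL y)).2
    have h5 := le_abs_self a
    by_contra hlt
    push Not at hlt
    have h6 : 1 < ‖y‖ := by
      have : 0 ≤ (‖Lc‖ + |a| + 1) / c := by positivity
      linarith
    have h7 : ‖Lc‖ + |a| + 1 < c * ‖y‖ := by
      have : (‖Lc‖ + |a| + 1) / c < ‖y‖ := by linarith
      rwa [div_lt_iff₀ hc, mul_comm] at this
    have h8 : (‖Lc‖ + |a| + 1) * ‖y‖ < c * ‖y‖ * ‖y‖ := mul_lt_mul_of_pos_right h7 (by linarith)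
    nlinarith [abs_nonneg a, norm_nonneg Lc]
  obtain ⟨y, -, hy⟩ := hcomp.inter_iInter_nonempty t ht (by
    intro u
    let ι := Option u
    let idx : ι → M × {e : ℝ // 0 < e} := fun o => o.elim (⟨q0, hq0⟩, ⟨1, one_pos⟩) (fun i => i.1)
    obtain ⟨y, hy⟩ := P.finite_feas (fun o : ι => (idx o).1.1)
      (fun i j => hM.1 _ (idx i).1.2 _ (idx j).1.2) (fun o => (idx o).2.1)
      (fun o => (idx o).2.2) z D hDn
    refine ⟨y, (hy none).le, ?_⟩
    simp only [Set.mem_iInter]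
    intro i hi
    exact (hy (some ⟨i, hi⟩)).le)
  refine ⟨y, hM.2 _ ?_⟩
  intro q hq
  have hgq : 0 ≤ g q y := by
    refine le_of_forall_pos_le_add fun e he => ?_
    have := Set.mem_iInter.1 hy (⟨q, hq⟩, ⟨e, he⟩)
    have h : -e ≤ g q y := this
    linarith
  have : P.B (z - D y - q.2) (y - q.1) = g q y := by
    simp only [g, map_sub, map_add, LinearMap.sub_apply, LinearMap.add_apply]
    ring
  exact hgq.trans_eq this.symm

def Core (D : Set V) : Prop := ∀ v ∈ Submodule.span ℝ D, ∃ ε : ℝ, 0 < ε ∧ ε • v ∈ closure D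

theorem core_of_rint {W : Type*} [NormedAddCommGroup W] [NormedSpace ℝ W]
    [FiniteDimensional ℝ V] {C : Set V} {p : V} (hp : p ∈ rint C) (T : V →ₗ[ℝ] W)
    (hT : T p = 0) : Core (T '' C) := by
  have hTc : Continuous T := T.continuous_of_finiteDimensional
  obtain ⟨p', hp', rfl⟩ := hp
  intro v hv
  have hle : Submodule.span ℝ (T '' C) ≤
      (affineSpan ℝ (closure C)).direction.map T := by
    rw [Submodule.span_le]
    rintro _ ⟨c, hc, rfl⟩
    refine ⟨c -ᵥ (p' : V), AffineSubspace.vsub_mem_direction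
      (subset_affineSpan ℝ _ (subset_closure hc)) p'.2, ?_⟩
    simp [hT]
  obtain ⟨d, hd, rfl⟩ := hle hv
  let γ : ℝ → affineSpan ℝ (closure C) := fun s =>
    ⟨(s • d) +ᵥ (p' : V), AffineSubspace.vadd_mem_of_mem_direction
      (Submodule.smul_mem _ s hd) p'.2⟩
  have hγ : Continuous γ := by
    refine Continuous.subtype_mk ?_ _
    simp only [vadd_eq_add]
    fun_prop
  have hγ0 : γ 0 = p' := by ext; simp [γ]
  have hev : ∀ᶠ s in nhds (0 : ℝ), γ s ∈ interior ((↑) ⁻¹' closure C : Set (affineSpan ℝ (closure C))) := by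
    apply hγ.continuousAt.eventually_mem
    rw [hγ0]
    exact isOpen_interior.mem_nhds hp'
  obtain ⟨s, hs, hs0⟩ := ((hev.filter_mono nhdsWithin_le_nhds).and
    (self_mem_nhdsWithin : Set.Ioi (0 : ℝ) ∈ nhdsWithin 0 (Set.Ioi 0))).exists
  refine ⟨s, hs0, ?_⟩
  have h1 : (s • d + (p' : V)) ∈ closure C := by
    have := interior_subset hs
    exact this
  have h2 : T (s • d + (p' : V)) = s • T d := by simp [hT]
  rw [← h2]
  exact image_closure_subset_closure_image hTc ⟨_, h1, rfl⟩

theorem ultra_lim [FiniteDimensional ℝ V] {α : Type*} (𝒰 : Ultrafilter α)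
    (f : α → V) (R : ℝ) (hf : ∀ᶠ k in (𝒰 : Filter α), ‖f k‖ ≤ R) :
    ∃ a, Filter.Tendsto f 𝒰 (nhds a) := by
  have : ProperSpace V := FiniteDimensional.proper ℝ V
  obtain ⟨a, -, ha⟩ := (isCompact_closedBall (0 : V) R).ultrafilter_le_nhds (𝒰.map f) (by
    rw [Filter.le_principal_iff]
    change ∀ᶠ k in (𝒰 : Filter α), f k ∈ Metric.closedBall 0 R
    filter_upwards [hf] with k hk
    simpa using hk)
  exact ⟨a, ha⟩

theorem restrict_max [FiniteDimensional ℝ X] [FiniteDimensional ℝ U]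
    (P : Pairing X) (Q : Pairing U) {M : Set ((X × U) × (X × U))} (hM : (P.prod Q).Max M)
    (hcore : Core {u : U | ∃ x x' u', ((x, u), (x', u')) ∈ M}) :
    P.Max {p : X × X | ∃ u', ((p.1, 0), (p.2, u')) ∈ M} := by
  have hmono : P.Mono {p : X × X | ∃ u', ((p.1, 0), (p.2, u')) ∈ M} := by
    rintro p ⟨u, hu⟩ q ⟨w, hw⟩
    have := hM.1 _ hu _ hw
    simpa using this
  refine ⟨hmono, ?_⟩
  suffices H : ∀ z : X, ∃ x u', ((x, 0), (z - x, u')) ∈ M by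
    intro p hp
    obtain ⟨x, u', hx⟩ := H (p.1 + p.2)
    have h1 := hp (x, p.1 + p.2 - x) ⟨u', hx⟩
    have h2 := P.pos (p.1 - x)
    have h3 : P.B (p.2 - (p.1 + p.2 - x)) (p.1 - x) = - P.B (p.1 - x) (p.1 - x) := by
      rw [← LinearMap.neg_apply, ← map_neg]; congr 2; abel
    simp only at h1
    rw [h3] at h1
    have h4 : ‖p.1 - x‖ ^ 2 = 0 := le_antisymm (by linarith) (sq_nonneg _)
    have h5 : p.1 = x := by
      rw [← sub_eq_zero, ← norm_eq_zero]; exact pow_eq_zero_iff (two_ne_zero) |>.1 h4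
    refine ⟨u', ?_⟩
    have h6 : p.2 = p.1 + p.2 - x := by rw [h5]; abel
    rw [h6, h5]; rw [h5] at hx; exact hx
  intro z
  set D : Set U := {u : U | ∃ x x' u', ((x, u), (x', u')) ∈ M} with hDdef
  -- approximate solutions
  have happ : ∀ k : ℕ, ∃ y : X × U, (y, (z - y.1, - ((k : ℝ) + 1) • y.2)) ∈ M := by
    intro k
    have hk : (1 : ℝ) ≤ (k : ℝ) + 1 := by linarith [(Nat.cast_nonneg k : (0 : ℝ) ≤ k)]
    obtain ⟨y, hy⟩ := (P.prod Q).minty hM (z, 0)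
      (LinearMap.prodMap LinearMap.id (((k : ℝ) + 1) • LinearMap.id)) 1 one_pos (by
        intro y
        have h1 := (P.prod Q).pos y
        have h2 := Q.nonneg y.2
        simp only [prod_B, LinearMap.prodMap_apply, LinearMap.id_apply, LinearMap.smul_apply,
          map_smul, smul_eq_mul] at h1 ⊢
        nlinarith)
    refine ⟨y, ?_⟩
    convert hy using 2
    ext
    · simp
    · simp [neg_smul]
      module
  choose y hy using happ
  let x : ℕ → X := fun k => (y k).1
  let v : ℕ → U := fun k => - ((k : ℝ) + 1) • (y k).2
  let lam : ℕ → ℝ := fun k => 1 / ((k : ℝ) + 1)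
  have hlam0 : ∀ k, 0 < lam k := fun k => by simp only [lam]; positivity
  have hlam1 : ∀ k, lam k ≤ 1 := fun k => by
    simp only [lam]
    rw [div_le_one (by positivity)]
    linarith [(Nat.cast_nonneg k : (0 : ℝ) ≤ k)]
  have hu : ∀ k, (y k).2 = - (lam k • v k) := fun k => by
    have : (k : ℝ) + 1 ≠ 0 := by positivity
    simp only [lam, v, smul_smul, neg_smul, smul_neg, neg_neg]
    rw [one_div, inv_mul_cancel₀ this, one_smul]
  have hmem : ∀ k, ((x k, - (lam k • v k)), (z - x k, v k)) ∈ M := fun k => by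
    have := hy k
    rw [← hu k]; exact this
  have hvspan : ∀ k, v k ∈ Submodule.span ℝ D := fun k =>
    Submodule.smul_mem _ _ (Submodule.subset_span ⟨_, _, _, hy k⟩)
  -- basic bound
  have hbound : ∀ x0 u0 x0' u0', ((x0, u0), (x0', u0')) ∈ M → ∃ C : ℝ, ∀ k,
      Q.B (v k) u0 + (1 / 2) * ‖x k - x0‖ ^ 2 ≤ C := by
    intro x0 u0 x0' u0' h0
    refine ⟨(1 / 2) * P.B (z - x0 - x0') (z - x0 - x0') + Q.B u0' u0' + Q.B u0' u0, fun k => ?_⟩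
    have h1 := hM.1 _ (hmem k) _ h0
    simp only [prod_B, Prod.fst_sub, Prod.snd_sub] at h1
    have h2 := P.pos (x k - x0)
    have h3 := P.nonneg ((x k - x0) - (z - x0 - x0'))
    have h4 := Q.nonneg (v k - u0')
    have h4' := Q.nonneg (v k)
    have h5 := Q.nonneg u0'
    have e1 : P.B (z - x k - x0') (x k - x0) =
        P.B (z - x0 - x0') (x k - x0) - P.B (x k - x0) (x k - x0) := by
      rw [← LinearMap.sub_apply, ← map_sub]; congr 2; abel
    rw [e1] at h1
    generalize x k - x0 = d at *
    generalize z - x0 - x0' = a at *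
    have hl0 := hlam0 k
    have hl1 := hlam1 k
    have s1 := P.symm a d
    have s2 := Q.symm u0' (v k)
    simp only [map_sub, map_neg, map_smul, LinearMap.sub_apply, LinearMap.neg_apply,
      LinearMap.smul_apply, smul_eq_mul] at h1 h3 h4
    have h6 : lam k * (2 * Q.B (v k) u0') ≤ lam k * (Q.B (v k) (v k) + Q.B u0' u0') :=
      mul_le_mul_of_nonneg_left (by linarith) hl0.le
    have h7 : lam k * Q.B u0' u0' ≤ Q.B u0' u0' := by nlinarith
    have h8 : 0 ≤ lam k * Q.B (v k) (v k) := mul_nonneg hl0.le h4'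
    rw [s2] at *
    nlinarith
  -- ultrafilter limits
  let 𝒰 : Ultrafilter ℕ := Filter.hyperfilter ℕ
  have h𝒰 : (𝒰 : Filter ℕ) ≤ Filter.atTop := by
    rw [← Nat.cofinite_eq_atTop]; exact Filter.hyperfilter_le_cofinite
  obtain ⟨x0, x0', u0, u0', h00⟩ : ∃ x0 x0' u0 u0', ((x0, u0), (x0', u0')) ∈ M :=
    ⟨_, _, _, _, hmem 0⟩
  let τ : ℕ → ℝ := fun k => (1 + ‖v k‖)⁻¹
  have hτ0 : ∀ k, 0 < τ k := fun k => by simp only [τ]; positivity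
  have hτ1 : ∀ k, τ k ≤ 1 := fun k => inv_le_one_of_one_le₀ (by linarith [norm_nonneg (v k)])
  have hτn : ∀ k, τ k + ‖τ k • v k‖ = 1 := fun k => by
    rw [norm_smul, Real.norm_of_nonneg (hτ0 k).le]
    have : 1 + ‖v k‖ ≠ 0 := by positivity
    simp only [τ]
    field_simp
  obtain ⟨t, ht⟩ := ultra_lim 𝒰 τ 1 (Filter.Eventually.of_forall fun k => by
    rw [Real.norm_of_nonneg (hτ0 k).le]; exact hτ1 k)
  obtain ⟨w, hw⟩ := ultra_lim 𝒰 (fun k => τ k • v k) 1 (Filter.Eventually.of_forall fun k => by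
    linarith [hτn k, hτ0 k])
  have htw : t + ‖w‖ = 1 :=
    tendsto_nhds_unique (ht.add hw.norm) (by simp only [hτn]; exact tendsto_const_nhds)
  have hwspan : w ∈ Submodule.span ℝ D :=
    (Submodule.closed_of_finiteDimensional (Submodule.span ℝ D)).mem_of_tendsto hw
      (Filter.Eventually.of_forall fun k => Submodule.smul_mem _ _ (hvspan k))
  have ht0 : t ≠ 0 := by
    intro h0
    subst h0
    have hwle : ∀ u0 ∈ D, Q.B w u0 ≤ 0 := by
      rintro u0 ⟨a, b, c, habc⟩
      obtain ⟨C, hC⟩ := hbound _ _ _ _ habc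
      have l1 : Filter.Tendsto (fun k => Q.B (τ k • v k) u0) 𝒰 (nhds (Q.B w u0)) :=
        Q.tendsto hw tendsto_const_nhds
      have l2 : Filter.Tendsto (fun k => τ k * C) 𝒰 (nhds (0 * C)) := ht.mul_const C
      rw [zero_mul] at l2
      refine le_of_tendsto_of_tendsto' l1 l2 fun k => ?_
      rw [map_smul, LinearMap.smul_apply, smul_eq_mul]
      refine mul_le_mul_of_nonneg_left ?_ (hτ0 k).le
      nlinarith [hC k, sq_nonneg ‖x k - a‖]
    obtain ⟨ε, hε, hεw⟩ := hcore w hwspan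
    have hcl : IsClosed {u | Q.B w u ≤ 0} :=
      isClosed_le (Q.cont continuous_const continuous_id) continuous_const
    have h1 : Q.B w (ε • w) ≤ 0 := closure_minimal hwle hcl hεw
    rw [map_smul, smul_eq_mul] at h1
    have h2 := Q.pos w
    have h3 : ‖w‖ = 1 := by linarith
    rw [h3] at h2
    nlinarith
  have hv : Filter.Tendsto v 𝒰 (nhds (t⁻¹ • w)) := by
    have := (ht.inv₀ ht0).smul hw
    refine this.congr fun k => ?_
    rw [smul_smul, inv_mul_cancel₀ (hτ0 k).ne', one_smul]
  obtain ⟨C, hC⟩ := hbound _ _ _ _ h00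
  have hBv : Filter.Tendsto (fun k => Q.B (v k) u0) 𝒰 (nhds (Q.B (t⁻¹ • w) u0)) :=
    Q.tendsto hv tendsto_const_nhds
  obtain ⟨a, ha⟩ := ultra_lim 𝒰 (fun k => x k - x0) (2 * (C - (Q.B (t⁻¹ • w) u0 - 1)) + 1) (by
    filter_upwards [hBv.eventually (lt_mem_nhds (sub_one_lt _))] with k hk
    have := hC k
    nlinarith [sq_nonneg (‖x k - x0‖ - 1)])
  have hx : Filter.Tendsto x 𝒰 (nhds (a + x0)) := by
    simpa using ha.add_const x0
  have hl : Filter.Tendsto lam 𝒰 (nhds 0) :=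
    (tendsto_one_div_add_atTop_nhds_zero_nat (𝕜 := ℝ)).mono_left h𝒰
  have hlv : Filter.Tendsto (fun k => -(lam k • v k)) 𝒰 (nhds 0) := by
    simpa using (hl.smul hv).neg
  refine ⟨a + x0, t⁻¹ • w, hM.2 _ fun q hq => ?_⟩
  have T1 : Filter.Tendsto (fun k => (z - x k, v k) - q.2) 𝒰
      (nhds ((z - (a + x0), t⁻¹ • w) - q.2)) :=
    ((hx.const_sub z).prodMk_nhds hv).sub_const q.2
  have T2 : Filter.Tendsto (fun k => (x k, -(lam k • v k)) - q.1) 𝒰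
      (nhds ((a + x0, 0) - q.1)) :=
    (hx.prodMk_nhds hlv).sub_const q.1
  exact ge_of_tendsto' ((P.prod Q).tendsto T1 T2) fun k => hM.1 _ (hmem k) _ hq

theorem swap_max (P : Pairing X) (Q : Pairing U) {M : Set ((X × U) × (X × U))}
    (hM : (P.prod Q).Max M) :
    (P.prod Q).Max {p | ((p.1.1, p.2.2), (p.2.1, p.1.2)) ∈ M} := by
  constructor
  · intro p hp q hq
    have := hM.1 _ hp _ hq
    simp only [prod_B, Prod.fst_sub, Prod.snd_sub] at this ⊢
    rwa [Q.symm (p.2.2 - q.2.2)]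
  · intro p hp
    refine hM.2 _ fun q hq => ?_
    have := hp ((q.1.1, q.2.2), (q.2.1, q.1.2)) hq
    simp only [prod_B, Prod.fst_sub, Prod.snd_sub] at this ⊢
    rwa [Q.symm (p.1.2 - q.2.2)]

end Pairing

theorem dot_comm' {n : ℕ} (x y : Fin n → ℝ) : dot x y = dot y x := by
  unfold dot; simp only [mul_comm]

theorem dot_add_l {n : ℕ} (x y z : Fin n → ℝ) : dot (x + y) z = dot x z + dot y z := by
  unfold dot; simp only [Pi.add_apply, add_mul, Finset.sum_add_distrib]

theorem dot_smul_l {n : ℕ} (c : ℝ) (x y : Fin n → ℝ) : dot (c • x) y = c • dot x y := by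
  unfold dot; simp only [Pi.smul_apply, smul_eq_mul, mul_assoc, Finset.mul_sum]

noncomputable def dotP (n : ℕ) : Pairing (Fin n → ℝ) where
  B := LinearMap.mk₂ ℝ dot
    (fun _ _ _ => dot_add_l _ _ _) (fun _ _ _ => dot_smul_l _ _ _)
    (fun x y z => by rw [dot_comm', dot_add_l, dot_comm' y, dot_comm' z])
    (fun c x y => by rw [dot_comm', dot_smul_l, dot_comm' y])
  symm := fun x y => dot_comm' x y
  pos := by
    intro x
    simp only [LinearMap.mk₂_apply, dot]
    have hn : 0 ≤ ∑ i, x i * x i := Finset.sum_nonneg fun i _ => mul_self_nonneg _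
    have : ‖x‖ ≤ Real.sqrt (∑ i, x i * x i) := by
      refine (pi_norm_le_iff_of_nonneg (Real.sqrt_nonneg _)).2 fun i => ?_
      refine Real.le_sqrt_of_sq_le ?_
      rw [Real.norm_eq_abs, sq_abs, sq]
      exact Finset.single_le_sum (f := fun i => x i * x i)
        (fun i _ => mul_self_nonneg _) (Finset.mem_univ i)
    calc ‖x‖ ^ 2 ≤ (Real.sqrt (∑ i, x i * x i)) ^ 2 := by gcongr
      _ = _ := Real.sq_sqrt hn

@[simp] theorem dotP_B {n : ℕ} (x y : Fin n → ℝ) : (dotP n).B x y = dot x y := rfl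

theorem dot_neg_neg' {n : ℕ} (x y x' y' : Fin n → ℝ) :
    dot (x' - x) (y' - y) = dot (x - x') (y - y') := by
  unfold dot
  refine Finset.sum_congr rfl fun i _ => ?_
  simp only [Pi.sub_apply]; ring

theorem MaxMono4.mem {n1 n2 : ℕ}
    {M : Set ((Fin n1 → ℝ) × (Fin n2 → ℝ) × (Fin n1 → ℝ) × (Fin n2 → ℝ))} (hM : MaxMono4 M)
    {f1 f2 e1 e2} (h : ∀ f1' f2' e1' e2', (f1', f2', e1', e2') ∈ M →
      0 ≤ dot (e1 - e1') (f1 - f1') + dot (e2 - e2') (f2 - f2')) : (f1, f2, e1, e2) ∈ M := by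
  have := hM.2 (insert (f1, f2, e1, e2) M) (by
    intro a1 a2 b1 b2 a1' a2' b1' b2' ha hb
    rcases ha with ha | ha <;> rcases hb with hb | hb
    · simp only [Prod.mk.injEq] at ha hb
      obtain ⟨rfl, rfl, rfl, rfl⟩ := ha
      obtain ⟨rfl, rfl, rfl, rfl⟩ := hb
      simp [dot]
    · simp only [Prod.mk.injEq] at ha
      obtain ⟨rfl, rfl, rfl, rfl⟩ := ha
      exact h _ _ _ _ hb
    · simp only [Prod.mk.injEq] at hb
      obtain ⟨rfl, rfl, rfl, rfl⟩ := hb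
      rw [dot_neg_neg' b1', dot_neg_neg' b2']
      exact h _ _ _ _ ha
    · exact hM.1 _ _ _ _ _ _ _ _ ha hb) (Set.subset_insert _ _)
  rw [← this]; exact Set.mem_insert _ _

theorem MaxMono4.exists_neg {n1 n2 : ℕ}
    {M : Set ((Fin n1 → ℝ) × (Fin n2 → ℝ) × (Fin n1 → ℝ) × (Fin n2 → ℝ))} (hM : MaxMono4 M)
    {f1 f2 e1 e2} (h : (f1, f2, e1, e2) ∉ M) : ∃ f1' f2' e1' e2', (f1', f2', e1', e2') ∈ M ∧
      dot (e1 - e1') (f1 - f1') + dot (e2 - e2') (f2 - f2') < 0 := by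
  by_contra hc
  push Not at hc
  exact h (hM.mem hc)

/-- The joint relation in the coordinates `g = f₁ + f₂`, `h = e₂ - e₁`. -/
def joint {na nb n : ℕ}
    (Ma : Set ((Fin na → ℝ) × (Fin n → ℝ) × (Fin na → ℝ) × (Fin n → ℝ)))
    (Mb : Set ((Fin nb → ℝ) × (Fin n → ℝ) × (Fin nb → ℝ) × (Fin n → ℝ))) :
    Set (((((Fin na → ℝ) × (Fin nb → ℝ)) × (Fin n → ℝ)) × (Fin n → ℝ)) ×
      ((((Fin na → ℝ) × (Fin nb → ℝ)) × (Fin n → ℝ)) × (Fin n → ℝ))) :=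
  {p | (p.1.1.1.1, p.1.2 - p.1.1.2, p.2.1.1.1, p.2.2) ∈ Ma ∧
    (p.1.1.1.2, p.1.1.2, p.2.1.1.2, p.2.1.2 + p.2.2) ∈ Mb}

theorem dot_coord {n : ℕ} (h h' f f' k k' g g' : Fin n → ℝ) :
    dot (h - h') (f - f') + dot (k - k') (g - g') =
      dot (k - k') ((g - f) - (g' - f')) + dot ((h + k) - (h' + k')) (f - f') := by
  unfold dot
  rw [← Finset.sum_add_distrib, ← Finset.sum_add_distrib]
  refine Finset.sum_congr rfl fun i _ => ?_
  simp only [Pi.sub_apply, Pi.add_apply]; ring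

theorem joint_max {na nb n : ℕ}
    {Ma : Set ((Fin na → ℝ) × (Fin n → ℝ) × (Fin na → ℝ) × (Fin n → ℝ))}
    {Mb : Set ((Fin nb → ℝ) × (Fin n → ℝ) × (Fin nb → ℝ) × (Fin n → ℝ))}
    (hMa : MaxMono4 Ma) (hMb : MaxMono4 Mb) :
    ((((dotP na).prod (dotP nb)).prod (dotP n)).prod (dotP n)).Max (joint Ma Mb) := by
  constructor
  · rintro ⟨⟨⟨⟨fa, fb⟩, f⟩, g⟩, ⟨⟨⟨ea, eb⟩, h⟩, k⟩⟩ ⟨h1, h2⟩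
      ⟨⟨⟨⟨fa', fb'⟩, f'⟩, g'⟩, ⟨⟨⟨ea', eb'⟩, h'⟩, k'⟩⟩ ⟨h1', h2'⟩
    have A := hMa.1 _ _ _ _ _ _ _ _ h1 h1'
    have B := hMb.1 _ _ _ _ _ _ _ _ h2 h2'
    simp only [Pairing.prod_B, Prod.fst_sub, Prod.snd_sub, dotP_B] at A B ⊢
    have := dot_coord h h' f f' k k' g g'
    linarith
  · rintro ⟨⟨⟨⟨fa, fb⟩, f⟩, g⟩, ⟨⟨⟨ea, eb⟩, h⟩, k⟩⟩ hp
    have key : ∀ fa' f1' ea' e1' fb' f2' eb' e2', (fa', f1', ea', e1') ∈ Ma →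
        (fb', f2', eb', e2') ∈ Mb →
        0 ≤ (dot (ea - ea') (fa - fa') + dot (k - e1') ((g - f) - f1')) +
          (dot (eb - eb') (fb - fb') + dot ((h + k) - e2') (f - f2')) := by
      intro fa' f1' ea' e1' fb' f2' eb' e2' ha hb
      have A := hp ⟨⟨⟨⟨fa', fb'⟩, f2'⟩, f1' + f2'⟩, ⟨⟨⟨ea', eb'⟩, e2' - e1'⟩, e1'⟩⟩
        (by simpa [joint] using And.intro ha hb)
      simp only [Pairing.prod_B, Prod.fst_sub, Prod.snd_sub, dotP_B] at A
      have := dot_coord h (e2' - e1') f f2' k e1' g (f1' + f2')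
      rw [add_sub_cancel_right, sub_add_cancel] at this
      linarith
    have z0 : ∀ {m : ℕ} (a b : Fin m → ℝ), dot (a - a) (b - b) = 0 := by
      intros; simp [dot]
    by_cases hb : (fb, f, eb, h + k) ∈ Mb
    · refine ⟨hMa.mem fun fa' f1' ea' e1' ha' => ?_, hb⟩
      have := key _ _ _ _ _ _ _ _ ha' hb
      rw [z0, z0] at this
      simpa using this
    · exfalso
      obtain ⟨fb', f2', eb', e2', hb', hneg⟩ := hMb.exists_neg hb
      have ha : (fa, g - f, ea, k) ∈ Ma := hMa.mem fun fa' f1' ea' e1' ha' => by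
        have := key _ _ _ _ _ _ _ _ ha' hb'
        linarith
      have := key _ _ _ _ _ _ _ _ ha hb'
      rw [z0, z0] at this
      linarith

/-- Composition of maximal monotone relations is maximal monotone, under the
relative-interior conditions on the shared flow and effort variables:
`C_f = Π(M_a, F) × Π(M_b, F)` and
`C_e = {(e₁,e₂) : ∃ f, (f,e₁) ∈ Π(M_a, F × E), (−f,e₂) ∈ Π(M_b, F × E)}`,
and there exist `f̄`, `ē` with `(f̄, −f̄) ∈ rint C_f` and `(ē, ē) ∈ rint C_e`. -/
theorem maximalMonotone_relComp {na nb n : ℕ}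
    (Ma : Set ((Fin na → ℝ) × (Fin n → ℝ) × (Fin na → ℝ) × (Fin n → ℝ)))
    (Mb : Set ((Fin nb → ℝ) × (Fin n → ℝ) × (Fin nb → ℝ) × (Fin n → ℝ)))
    (hMa : MaxMono4 Ma) (hMb : MaxMono4 Mb)
    (hf : ∃ fbar : Fin n → ℝ,
      (fbar, -fbar) ∈ rint
        ({f : Fin n → ℝ | ∃ fa ea e, (fa, f, ea, e) ∈ Ma} ×ˢ
         {f : Fin n → ℝ | ∃ fb eb e, (fb, f, eb, e) ∈ Mb}))
    (he : ∃ ebar : Fin n → ℝ,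
      (ebar, ebar) ∈ rint
        {p : (Fin n → ℝ) × (Fin n → ℝ) | ∃ f,
          (∃ fa ea, (fa, f, ea, p.1) ∈ Ma) ∧ (∃ fb eb, (fb, -f, eb, p.2) ∈ Mb)}) :
    MaxMono4 (RelComp Ma Mb) := by
  obtain ⟨fbar, hf⟩ := hf
  obtain ⟨ebar, he⟩ := he
  have h0 := joint_max hMa hMb
  have h1 := Pairing.restrict_max _ _ h0 (by
    have := Pairing.core_of_rint hf
      (LinearMap.fst ℝ (Fin n → ℝ) (Fin n → ℝ) + LinearMap.snd ℝ (Fin n → ℝ) (Fin n → ℝ))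
      (by simp)
    convert this using 1
    ext g
    constructor
    · rintro ⟨⟨⟨fa, fb⟩, f⟩, ⟨⟨ea, eb⟩, h⟩, k, ha, hb⟩
      exact ⟨(g - f, f), ⟨⟨fa, ea, k, ha⟩, ⟨fb, eb, h + k, hb⟩⟩, by simp⟩
    · rintro ⟨⟨f1, f2⟩, ⟨⟨fa, ea, e1, ha⟩, ⟨fb, eb, e2, hb⟩⟩, rfl⟩
      exact ⟨((fa, fb), f2), ((ea, eb), e2 - e1), e1, by simpa [joint] using And.intro ha hb⟩)
  have h2 := Pairing.swap_max _ _ h1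
  have h3 := Pairing.restrict_max _ _ h2 (by
    have := Pairing.core_of_rint he
      (LinearMap.snd ℝ (Fin n → ℝ) (Fin n → ℝ) - LinearMap.fst ℝ (Fin n → ℝ) (Fin n → ℝ))
      (by simp)
    convert this using 1
    ext h
    constructor
    · rintro ⟨⟨fa, fb⟩, ⟨ea, eb⟩, f, k, ha, hb⟩
      simp only [zero_sub] at ha hb
      exact ⟨(k, h + k), ⟨-f, ⟨fa, ea, ha⟩, ⟨fb, eb, by simpa using hb⟩⟩, by simp⟩
    · rintro ⟨⟨e1, e2⟩, ⟨f, ⟨fa, ea, ha⟩, ⟨fb, eb, hb⟩⟩, rfl⟩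
      exact ⟨(fa, fb), (ea, eb), -f, e1, by simpa [joint] using And.intro ha hb⟩)
  have hiff : ∀ fa fb ea eb, (fa, fb, ea, eb) ∈ RelComp Ma Mb ↔
      (((fa, fb), (ea, eb)) : ((Fin na → ℝ) × (Fin nb → ℝ)) × ((Fin na → ℝ) × (Fin nb → ℝ))) ∈
        {p : ((Fin na → ℝ) × (Fin nb → ℝ)) × ((Fin na → ℝ) × (Fin nb → ℝ)) |
          ∃ u', ((p.1, (0 : Fin n → ℝ)), (p.2, u')) ∈
            {p : (((Fin na → ℝ) × (Fin nb → ℝ)) × (Fin n → ℝ)) ×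
                (((Fin na → ℝ) × (Fin nb → ℝ)) × (Fin n → ℝ)) |
              ((p.1.1, p.2.2), (p.2.1, p.1.2)) ∈
              {p : (((Fin na → ℝ) × (Fin nb → ℝ)) × (Fin n → ℝ)) ×
                (((Fin na → ℝ) × (Fin nb → ℝ)) × (Fin n → ℝ)) |
                ∃ u', ((p.1, (0 : Fin n → ℝ)), (p.2, u')) ∈ joint Ma Mb}}} := by
    intro fa fb ea eb
    constructor
    · rintro ⟨f, e, ha, hb⟩
      exact ⟨-f, e, by simpa [joint] using And.intro ha hb⟩
    · rintro ⟨f, e, ha, hb⟩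
      exact ⟨-f, e, by simpa using ha, by simpa using hb⟩
  constructor
  · intro f1 f2 e1 e2 f1' f2' e1' e2' h h'
    have := h3.1 _ ((hiff _ _ _ _).1 h) _ ((hiff _ _ _ _).1 h')
    exact this
  · intro M' hM' hsub
    refine Set.Subset.antisymm ?_ hsub
    rintro ⟨f1, f2, e1, e2⟩ hp
    refine (hiff _ _ _ _).2 (h3.2 _ ?_)
    rintro ⟨⟨f1', f2'⟩, ⟨e1', e2'⟩⟩ hq
    have := hM' _ _ _ _ _ _ _ _ hp (hsub ((hiff _ _ _ _).2 hq))
    exact this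
end

section
/- Any separable Dirac structure D ⊆ F × E can be written as D = K × K^⊥ for some subspace K ⊆ F, where K^⊥ = {e ∈ E : ⟨e, f⟩ = 0 for all f ∈ K}. Conversely, for any subspace K ⊆ F, the subspace K × K^⊥ is a separable Dirac structure. -/
/-- The indefinite bilinear form `⟪(f₁,e₁),(f₂,e₂)⟫ = ⟨e₁,f₂⟩ + ⟨e₂,f₁⟩`
on `F × E`. -/
noncomputable def bform {n : ℕ} (p q : (Fin n → ℝ) × (Fin n → ℝ)) : ℝ :=
  dot p.2 q.1 + dot q.2 p.1

/-- A (constant) Dirac structure: a subspace `D ⊆ F × E` equal to its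
orthogonal companion w.r.t. the indefinite bilinear form. -/
def IsDirac {n : ℕ} (D : Set ((Fin n → ℝ) × (Fin n → ℝ))) : Prop :=
  (∃ W : Submodule ℝ ((Fin n → ℝ) × (Fin n → ℝ)), D = ↑W) ∧
  D = {p | ∀ q ∈ D, bform p q = 0}

/-- A Dirac structure is separable if `⟨e_a, f_b⟩ = 0` for all
`(f_a,e_a), (f_b,e_b) ∈ D`. -/
def SepRel {n : ℕ} (D : Set ((Fin n → ℝ) × (Fin n → ℝ))) : Prop :=
  ∀ p ∈ D, ∀ q ∈ D, dot p.2 q.1 = 0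

theorem aux_mem {n : ℕ} (K : Submodule ℝ (Fin n → ℝ)) (x : Fin n → ℝ)
    (h : ∀ e : Fin n → ℝ, (∀ f ∈ K, dot e f = 0) → dot e x = 0) : x ∈ K := by
  by_contra hx
  obtain ⟨φ, h1, h2⟩ := Submodule.exists_le_ker_of_notMem hx
  have key : ∀ y, dot (fun i => φ (Pi.single i 1)) y = φ y := by
    intro y
    rw [LinearMap.pi_apply_eq_sum_univ φ y]
    unfold dot
    refine Finset.sum_congr rfl fun i _ => ?_
    rw [smul_eq_mul, mul_comm]
    have hs : (Pi.single i 1 : Fin n → ℝ) = fun j => if i = j then 1 else 0 := by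
      funext j
      simp [Pi.single_apply, eq_comm]
    rw [← hs]
  apply h1
  rw [← key]
  apply h
  intro f hf
  rw [key]
  exact h2 hf

/-- A separable Dirac structure is of the form `K × K^⊥` for some subspace
`K ⊆ F`, and conversely every `K × K^⊥` is a separable Dirac structure. -/
theorem separable_dirac_iff_prod {n : ℕ} :
    (∀ D : Set ((Fin n → ℝ) × (Fin n → ℝ)), IsDirac D → SepRel D →
      ∃ K : Submodule ℝ (Fin n → ℝ),
        D = {p : (Fin n → ℝ) × (Fin n → ℝ) | p.1 ∈ K ∧ ∀ f ∈ K, dot p.2 f = 0}) ∧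
    (∀ K : Submodule ℝ (Fin n → ℝ),
      IsDirac {p : (Fin n → ℝ) × (Fin n → ℝ) | p.1 ∈ K ∧ ∀ f ∈ K, dot p.2 f = 0} ∧
      SepRel {p : (Fin n → ℝ) × (Fin n → ℝ) | p.1 ∈ K ∧ ∀ f ∈ K, dot p.2 f = 0}) := by
  constructor
  · rintro D ⟨⟨W, hW⟩, hD⟩ hs
    refine ⟨W.map (LinearMap.fst ℝ _ _), ?_⟩
    ext p
    constructor
    · intro hp
      refine ⟨⟨p, by rw [hW] at hp; exact hp, rfl⟩, ?_⟩
      rintro f ⟨q, hq, rfl⟩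
      exact hs p hp q (by rw [hW]; exact hq)
    · rintro ⟨⟨q, hq, hqp⟩, h2⟩
      have hq' : q ∈ D := by rw [hW]; exact hq
      rw [hD]
      intro r hr
      have hr' : r ∈ W := by rw [hW] at hr; exact hr
      have a := h2 r.1 ⟨r, hr', rfl⟩
      have b := hs r hr q hq'
      have hqp' : q.1 = p.1 := hqp
      unfold bform
      rw [a, ← hqp', b, add_zero]
  · intro K
    refine ⟨⟨⟨{ carrier := {p | p.1 ∈ K ∧ ∀ f ∈ K, dot p.2 f = 0}
                add_mem' := ?_, zero_mem' := ?_, smul_mem' := ?_ }, rfl⟩, ?_⟩, ?_⟩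
    · rintro a b ⟨ha, ha'⟩ ⟨hb, hb'⟩
      refine ⟨K.add_mem ha hb, fun f hf => ?_⟩
      have h1 := ha' f hf
      have h2 := hb' f hf
      unfold dot at *
      simp [add_mul, Finset.sum_add_distrib, h1, h2]
    · exact ⟨K.zero_mem, fun f hf => by simp [dot]⟩
    · rintro c a ⟨ha, ha'⟩
      refine ⟨K.smul_mem c ha, fun f hf => ?_⟩
      have h1 := ha' f hf
      unfold dot at *
      simp [mul_assoc, ← Finset.mul_sum, h1]
    · ext p
      constructor
      · rintro ⟨h1, h2⟩ q ⟨h3, h4⟩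
        unfold bform
        rw [h2 _ h3, h4 _ h1, add_zero]
      · intro h
        refine ⟨aux_mem K _ fun e he => ?_, fun f hf => ?_⟩
        · have := h (0, e) ⟨K.zero_mem, he⟩
          simpa [bform, dot] using this
        · have := h (f, 0) ⟨hf, fun f hf => by simp [dot]⟩
          simpa [bform, dot] using this
    · rintro p ⟨_, h⟩ q ⟨h', _⟩
      exact h _ h'
end

section
/- Every Dirac structure D ⊆ F × E is a maximal monotone relation. -/
/-- Monotone relation `M ⊆ F × E` (elements `(f, e)`). -/
def Mono2 {n : ℕ} (M : Set ((Fin n → ℝ) × (Fin n → ℝ))) : Prop :=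
  ∀ p ∈ M, ∀ q ∈ M, 0 ≤ dot (p.2 - q.2) (p.1 - q.1)

/-- Maximal monotone relation. -/
def MaxMono2 {n : ℕ} (M : Set ((Fin n → ℝ) × (Fin n → ℝ))) : Prop :=
  Mono2 M ∧ ∀ M', Mono2 M' → M ⊆ M' → M' = M

lemma dot_sub_smul {n : ℕ} (p q : (Fin n → ℝ) × (Fin n → ℝ)) (t : ℝ) :
    dot (p.2 - (t • q).2) (p.1 - (t • q).1)
      = dot p.2 p.1 - t * bform p q + t ^ 2 * dot q.2 q.1 := by
  simp only [dot, bform, mul_add, Finset.mul_sum, ← Finset.sum_add_distrib,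
    ← Finset.sum_sub_distrib]
  refine Finset.sum_congr rfl fun i _ => ?_
  simp only [Pi.sub_apply, Prod.smul_snd, Prod.smul_fst, Pi.smul_apply, smul_eq_mul]
  ring

/-- Every Dirac structure is a maximal monotone relation. -/
theorem dirac_maxMonotone {n : ℕ} (D : Set ((Fin n → ℝ) × (Fin n → ℝ)))
    (hD : IsDirac D) : MaxMono2 D := by
  obtain ⟨⟨W, rfl⟩, h⟩ := hD
  have iso : ∀ q ∈ (W : Set ((Fin n → ℝ) × (Fin n → ℝ))), dot q.2 q.1 = 0 := by
    intro q hq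
    have h1 := hq
    rw [h] at h1
    have h2 := h1 q hq
    simp only [bform] at h2
    linarith
  refine ⟨?_, ?_⟩
  · intro p hp q hq
    exact (iso (p - q) (W.sub_mem hp hq)).ge
  · intro M' hM hsub
    refine Set.Subset.antisymm ?_ hsub
    intro p hp
    rw [h]
    intro q hq
    by_contra hb
    have h1 := hM p hp _ (hsub (W.smul_mem ((dot p.2 p.1 + 1) / bform p q) hq))
    rw [dot_sub_smul, iso q hq, div_mul_cancel₀ _ hb] at h1
    linarith
end

section
/- A Dirac structure D ⊆ F × E is cyclically monotone if and only if it is separable; in that case D is maximal cyclically monotone. -/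
/-- Cyclically monotone relation `M ⊆ F × E` (elements `(f, e)`). -/
def CycMono2 {n : ℕ} (M : Set ((Fin n → ℝ) × (Fin n → ℝ))) : Prop :=
  ∀ m : ℕ, 1 ≤ m → ∀ (f e : ℕ → Fin n → ℝ),
    (∀ i ≤ m, (f i, e i) ∈ M) → f (m + 1) = f 0 →
    0 ≤ ∑ i ∈ Finset.range (m + 1), dot (e i) (f i - f (i + 1))

/-- Maximal cyclically monotone relation. -/
def MaxCycMono2 {n : ℕ} (M : Set ((Fin n → ℝ) × (Fin n → ℝ))) : Prop :=
  CycMono2 M ∧ ∀ M', CycMono2 M' → M ⊆ M' → M' = M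

theorem dot_sub_r {n : ℕ} (a b c : Fin n → ℝ) : dot a (b - c) = dot a b - dot a c := by
  simp [dot, mul_sub, Finset.sum_sub_distrib]

theorem dot_smul_r {n : ℕ} (t : ℝ) (a b : Fin n → ℝ) : dot a (t • b) = t * dot a b := by
  simp only [dot, Finset.mul_sum, Pi.smul_apply, smul_eq_mul]
  exact Finset.sum_congr rfl fun i _ => by ring

theorem dot_smul_l_s7 {n : ℕ} (t : ℝ) (a b : Fin n → ℝ) : dot (t • a) b = t * dot a b := by
  simp only [dot, Finset.mul_sum, Pi.smul_apply, smul_eq_mul]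
  exact Finset.sum_congr rfl fun i _ => by ring

theorem dot_zero_l {n : ℕ} (b : Fin n → ℝ) : dot 0 b = 0 := by simp [dot]

theorem dot_zero_r {n : ℕ} (b : Fin n → ℝ) : dot b 0 = 0 := by simp [dot]

theorem cyc_two {n : ℕ} {M : Set ((Fin n → ℝ) × (Fin n → ℝ))} (h : CycMono2 M)
    {p q : (Fin n → ℝ) × (Fin n → ℝ)} (hp : p ∈ M) (hq : q ∈ M) :
    0 ≤ dot p.2 p.1 - dot p.2 q.1 + (dot q.2 q.1 - dot q.2 p.1) := by
  have := h 1 le_rfl (fun i => if i = 1 then q.1 else p.1) (fun i => if i = 1 then q.2 else p.2)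
    (by intro i _; by_cases hi : i = 1 <;> simp [hi, hp, hq]) (by simp)
  simp [Finset.sum_range_succ, dot_sub_r] at this
  linarith

theorem cyc_three {n : ℕ} {M : Set ((Fin n → ℝ) × (Fin n → ℝ))} (h : CycMono2 M)
    {p q : (Fin n → ℝ) × (Fin n → ℝ)} (h0 : (0, 0) ∈ M) (hp : p ∈ M) (hq : q ∈ M) :
    0 ≤ dot p.2 p.1 - dot p.2 q.1 + dot q.2 q.1 := by
  have := h 2 (by norm_num)
    (fun i => if i = 1 then p.1 else if i = 2 then q.1 else 0)
    (fun i => if i = 1 then p.2 else if i = 2 then q.2 else 0)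
    (by
      intro i _
      by_cases hi : i = 1
      · simp [hi, hp]
      · by_cases hi2 : i = 2
        · simp [hi2, hq]
        · simpa [hi, hi2] using h0) (by simp)
  simp [Finset.sum_range_succ, dot_sub_r, dot_zero_l, dot_zero_r] at this
  linarith

/-- A Dirac structure is cyclically monotone iff it is separable, in which
case it is maximal cyclically monotone. -/
theorem dirac_cycMonotone_iff_separable {n : ℕ}
    (D : Set ((Fin n → ℝ) × (Fin n → ℝ))) (hD : IsDirac D) :
    (CycMono2 D ↔ SepRel D) ∧ (CycMono2 D → MaxCycMono2 D) := by
  obtain ⟨⟨W, hW⟩, hO⟩ := hD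
  have hbf : ∀ p ∈ D, ∀ q ∈ D, bform p q = 0 := by
    intro p hp
    rw [hO] at hp
    exact hp
  have hself : ∀ p ∈ D, dot p.2 p.1 = 0 := by
    intro p hp
    have := hbf p hp p hp
    simp only [bform] at this
    linarith
  have hsmul : ∀ (t : ℝ), ∀ p ∈ D, t • p ∈ D := by
    intro t p hp
    rw [hW] at hp ⊢
    exact W.smul_mem t hp
  have h0 : ((0, 0) : (Fin n → ℝ) × (Fin n → ℝ)) ∈ D := by
    rw [hW]
    exact W.zero_mem
  refine ⟨⟨?_, ?_⟩, ?_⟩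
  · intro h p hp q hq
    have h1 := cyc_three h h0 hp hq
    have h2 := cyc_three h h0 (hsmul (-1) p hp) hq
    rw [hself _ hp, hself _ hq] at h1
    rw [hself _ (hsmul (-1) p hp), hself _ hq, Prod.smul_snd, dot_smul_l_s7] at h2
    linarith
  · intro h m _ f e hm hf
    refine Finset.sum_nonneg fun i hi => ?_
    have hi' : i ≤ m := Nat.lt_succ_iff.mp (Finset.mem_range.mp hi)
    have h1 : dot (e i) (f i) = 0 := h _ (hm i hi') _ (hm i hi')
    have h2 : dot (e i) (f (i + 1)) = 0 := by
      rcases Nat.lt_or_ge i m with hlt | hge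
      · exact h _ (hm i hi') _ (hm (i + 1) hlt)
      · have : i = m := le_antisymm hi' hge
        subst this
        rw [hf]
        exact h _ (hm i hi') _ (hm 0 (Nat.zero_le _))
    rw [dot_sub_r, h1, h2, sub_zero]
  · intro h
    refine ⟨h, fun M' hM' hsub => Set.Subset.antisymm ?_ hsub⟩
    intro p hp
    rw [hO]
    intro q hq
    by_contra hb
    have h1 := cyc_two hM' hp (hsub (hsmul ((dot p.2 p.1 + 1) / bform p q) q hq))
    rw [hself _ (hsmul _ q hq), Prod.smul_snd, Prod.smul_fst, dot_smul_l_s7, dot_smul_r] at h1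
    have h2 : (dot p.2 p.1 + 1) / bform p q * (dot p.2 q.1 + dot q.2 p.1) = dot p.2 p.1 + 1 :=
      div_mul_cancel₀ _ hb
    linarith
end

section
/- Let D ⊆ F × E be a Dirac structure which is the graph of a linear map J : E → F, i.e. D = {(Je, e) : e ∈ E} (such J is necessarily skew-symmetric). Then D is cyclically monotone if and only if J = 0. The same conclusion holds if D is the graph of a linear map J : F → E. -/
theorem dot_eq_zero_of_cyc {n : ℕ} (D : Set ((Fin n → ℝ) × (Fin n → ℝ)))
    (hD : IsDirac D) (hM : CycMono2 D) (p q : (Fin n → ℝ) × (Fin n → ℝ))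
    (hp : p ∈ D) (hq : q ∈ D) : dot p.2 q.1 = 0 := by
  obtain ⟨⟨W, hW⟩, hO⟩ := hD
  have iso : ∀ a ∈ D, ∀ b ∈ D, bform a b = 0 := by
    intro a ha b hb
    rw [hO] at ha
    exact ha b hb
  have h0 : (0 : (Fin n → ℝ) × (Fin n → ℝ)) ∈ D := by
    rw [hW]; exact W.zero_mem
  have key : ∀ a ∈ D, dot a.2 q.1 ≤ 0 := by
    intro a ha
    have h := hM 2 (by norm_num)
      (fun i => if i = 1 then a.1 else if i = 2 then q.1 else 0)
      (fun i => if i = 1 then a.2 else if i = 2 then q.2 else 0)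
      (by
        intro i hi
        interval_cases i
        · exact h0
        · simpa using ha
        · simpa using hq)
      (by simp)
    have h1 := iso a ha a ha
    have h2 := iso q hq q hq
    simp [Finset.sum_range_succ, dot, mul_sub, Finset.sum_sub_distrib] at h
    simp only [bform, dot] at h1 h2
    simp only [dot]
    linarith
  have hn : -p ∈ D := by
    rw [hW] at hp ⊢; exact W.neg_mem hp
  have h1 := key p hp
  have h2 := key (-p) hn
  simp [dot] at h1 h2 ⊢
  linarith

theorem eq_zero_of_dot {n : ℕ} (x : Fin n → ℝ) (h : dot x x = 0) : x = 0 := by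
  unfold dot at h
  rw [Finset.sum_eq_zero_iff_of_nonneg (fun i _ => mul_self_nonneg _)] at h
  funext i
  simpa using h i (Finset.mem_univ i)

/-- A Dirac structure which is the graph of a linear map `J : E → F`
(resp. `J : F → E`) is cyclically monotone iff `J = 0`. -/
theorem dirac_graph_cycMonotone_iff_zero {n : ℕ} :
    (∀ J : (Fin n → ℝ) →ₗ[ℝ] (Fin n → ℝ),
      IsDirac {p : (Fin n → ℝ) × (Fin n → ℝ) | ∃ e, p = (J e, e)} →
      (CycMono2 {p : (Fin n → ℝ) × (Fin n → ℝ) | ∃ e, p = (J e, e)} ↔ J = 0)) ∧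
    (∀ J : (Fin n → ℝ) →ₗ[ℝ] (Fin n → ℝ),
      IsDirac {p : (Fin n → ℝ) × (Fin n → ℝ) | ∃ f, p = (f, J f)} →
      (CycMono2 {p : (Fin n → ℝ) × (Fin n → ℝ) | ∃ f, p = (f, J f)} ↔ J = 0)) := by
  constructor
  · intro J hD
    constructor
    · intro hM
      refine LinearMap.ext fun e => ?_
      exact eq_zero_of_dot _ (dot_eq_zero_of_cyc _ hD hM (J (J e), J e) (J e, e) ⟨_, rfl⟩ ⟨_, rfl⟩)
    · rintro rfl m hm f e h hc
      have hf : ∀ i ≤ m, f i = 0 := by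
        intro i hi
        obtain ⟨x, hx⟩ := h i hi
        simpa using congrArg Prod.fst hx
      refine le_of_eq (Finset.sum_eq_zero fun i hi => ?_).symm
      have hi' : i ≤ m := by simpa [Nat.lt_succ_iff] using hi
      have h2 : f (i + 1) = 0 := by
        rcases Nat.lt_or_eq_of_le hi' with h3 | h3
        · exact hf _ h3
        · rw [h3, hc]; exact hf 0 (Nat.zero_le _)
      simp [hf i hi', h2, dot]
  · intro J hD
    constructor
    · intro hM
      refine LinearMap.ext fun f => ?_
      exact eq_zero_of_dot _ (dot_eq_zero_of_cyc _ hD hM (f, J f) (J f, J (J f)) ⟨_, rfl⟩ ⟨_, rfl⟩)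
    · rintro rfl m hm f e h hc
      refine le_of_eq (Finset.sum_eq_zero fun i hi => ?_).symm
      have hi' : i ≤ m := by simpa [Nat.lt_succ_iff] using hi
      obtain ⟨x, hx⟩ := h i hi'
      have he : e i = 0 := by simpa using congrArg Prod.snd hx
      simp [he, dot]
end

section
/- Let M ⊆ ℝ^n × ℝ^n × ℝ^m × ℝ^m (elements written (f_S, e_S, y, u), with flows (f_S, y) and efforts (e_S, u)) be a monotone relation, and let H : ℝ^n → ℝ be differentiable. Let x : I → ℝ^n be differentiable on an interval I and u, y : I → ℝ^m be such that (−ẋ(t), ∇H(x(t)), y(t), u(t)) ∈ M for all t ∈ I, and suppose (0, ∇H(x̄), ȳ, ū) ∈ M for some x̄ ∈ ℝ^n, ū, ȳ ∈ ℝ^m (a steady state). Then the shifted Hamiltonian H_x̄(x) := H(x) − ⟨∇H(x̄), x − x̄⟩ − H(x̄) satisfies d/dt H_x̄(x(t)) ≤ ⟨u(t) − ū, y(t) − ȳ⟩ for all t ∈ I. If moreover H is strictly convex, then H_x̄ ≥ 0 with a strict global minimum value 0 at x̄, so the system is passive with respect to the shifted supply rate (equilibrium independent passivity). -/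
/-- Monotone relation with elements `(f_S, e_S, y, u)`, flows `(f_S, y)` and
efforts `(e_S, u)`. -/
def MonoPH {n m : ℕ}
    (M : Set ((Fin n → ℝ) × (Fin n → ℝ) × (Fin m → ℝ) × (Fin m → ℝ))) : Prop :=
  ∀ fS eS y u fS' eS' y' u',
    (fS, eS, y, u) ∈ M → (fS', eS', y', u') ∈ M →
    0 ≤ dot (eS - eS') (fS - fS') + dot (u - u') (y - y')

/-- The shifted Hamiltonian (Bregman divergence)
`H_x̄(x) = H(x) − ⟨∇H(x̄), x − x̄⟩ − H(x̄)`. -/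
noncomputable def shiftedHam {n : ℕ} (H : (Fin n → ℝ) → ℝ)
    (gradH : (Fin n → ℝ) → Fin n → ℝ) (xbar : Fin n → ℝ) : (Fin n → ℝ) → ℝ :=
  fun x => H x - dot (gradH xbar) (x - xbar) - H xbar

/-- Along any trajectory of an incrementally port-Hamiltonian system with
steady state `(x̄, ū, ȳ)`, the shifted Hamiltonian satisfies
`d/dt H_x̄(x(t)) ≤ ⟨u(t) − ū, y(t) − ȳ⟩`; if moreover `H` is strictly
convex, `H_x̄` is nonnegative with strict global minimum `0` at `x̄`
(equilibrium independent passivity). -/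
theorem incrementallyPH_equilibriumIndependentPassive {n m : ℕ}
    (M : Set ((Fin n → ℝ) × (Fin n → ℝ) × (Fin m → ℝ) × (Fin m → ℝ)))
    (hM : MonoPH M)
    (H : (Fin n → ℝ) → ℝ) (gradH : (Fin n → ℝ) → Fin n → ℝ)
    (hdiff : Differentiable ℝ H)
    (hgrad : ∀ p v, (fderiv ℝ H p) v = dot (gradH p) v)
    (I : Set ℝ) (x x' : ℝ → Fin n → ℝ) (u y : ℝ → Fin m → ℝ)
    (hx : ∀ t ∈ I, HasDerivAt x (x' t) t)
    (htraj : ∀ t ∈ I, (-(x' t), gradH (x t), y t, u t) ∈ M)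
    (xbar : Fin n → ℝ) (ubar ybar : Fin m → ℝ)
    (hsteady : ((0 : Fin n → ℝ), gradH xbar, ybar, ubar) ∈ M) :
    (∀ t ∈ I,
      HasDerivAt (fun τ => shiftedHam H gradH xbar (x τ))
        (dot (gradH (x t) - gradH xbar) (x' t)) t ∧
      dot (gradH (x t) - gradH xbar) (x' t) ≤ dot (u t - ubar) (y t - ybar)) ∧
    (StrictConvexOn ℝ Set.univ H →
      (∀ z, 0 ≤ shiftedHam H gradH xbar z) ∧
      shiftedHam H gradH xbar xbar = 0 ∧
      ∀ z, z ≠ xbar → 0 < shiftedHam H gradH xbar z) := by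
  have dsub : ∀ {k : ℕ} (a b c : Fin k → ℝ), dot (a - b) c = dot a c - dot b c := by
    intro k a b c
    simp [dot, sub_mul, Finset.sum_sub_distrib]
  refine ⟨fun t ht => ⟨?_, ?_⟩, fun hc => ?_⟩
  · have h1 : HasDerivAt (fun τ => H (x τ)) (dot (gradH (x t)) (x' t)) t := by
      rw [← hgrad]
      exact (hdiff (x t)).hasFDerivAt.comp_hasDerivAt t (hx t ht)
    have h2 : HasDerivAt (fun τ => dot (gradH xbar) (x τ - xbar))
        (dot (gradH xbar) (x' t)) t := by
      have h3 := (fderiv ℝ H xbar).hasFDerivAt.comp_hasDerivAt t ((hx t ht).sub_const xbar)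
      rw [hgrad] at h3
      refine h3.congr_of_eventuallyEq (Filter.Eventually.of_forall fun τ => ?_)
      exact (hgrad xbar _).symm
    rw [dsub]
    exact (h1.sub h2).sub_const (H xbar)
  · have h := hM _ _ _ _ _ _ _ _ (htraj t ht) hsteady
    have h4 : dot (gradH (x t) - gradH xbar) (-(x' t) - 0)
        = - dot (gradH (x t) - gradH xbar) (x' t) := by
      simp [dot]
    rw [h4] at h
    linarith
  · have h0 : shiftedHam H gradH xbar xbar = 0 := by simp [shiftedHam, dot]
    have hpos : ∀ z, z ≠ xbar → 0 < shiftedHam H gradH xbar z := by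
      intro z hz
      have hs : StrictConvexOn ℝ Set.univ (fun s : ℝ => H (xbar + s • (z - xbar))) := by
        refine ⟨convex_univ, fun a _ b _ hab α β hα hβ hαβ => ?_⟩
        have hne : xbar + a • (z - xbar) ≠ xbar + b • (z - xbar) := by
          intro h
          exact hab (smul_left_injective ℝ (sub_ne_zero.mpr hz) (add_left_cancel h))
        have h := hc.2 (Set.mem_univ _) (Set.mem_univ _) hne hα hβ hαβ
        have he : α • (xbar + a • (z - xbar)) + β • (xbar + b • (z - xbar))
            = xbar + (α • a + β • b) • (z - xbar) := by
          have hβ' : β = 1 - α := by linarith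
          subst hβ'
          simp only [smul_eq_mul]
          module
        rw [he] at h
        exact h
      have hd : HasDerivAt (fun s : ℝ => H (xbar + s • (z - xbar)))
          (dot (gradH xbar) (z - xbar)) 0 := by
        have hl : HasDerivAt (fun s : ℝ => xbar + s • (z - xbar)) (z - xbar) 0 := by
          simpa using ((hasDerivAt_id (0 : ℝ)).smul_const (z - xbar)).const_add xbar
        have hf : HasFDerivAt H (fderiv ℝ H xbar) (xbar + (0 : ℝ) • (z - xbar)) := by
          simpa using (hdiff xbar).hasFDerivAt
        rw [← hgrad]
        exact hf.comp_hasDerivAt (0 : ℝ) hl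
      have h := hs.lt_slope_of_hasDerivAt (Set.mem_univ 0) (Set.mem_univ 1) one_pos hd
      simp [slope_def_field] at h
      simp only [shiftedHam]
      linarith
    refine ⟨fun z => ?_, h0, hpos⟩
    by_cases hz : z = xbar
    · rw [hz, h0]
    · exact (hpos z hz).le
end

section
/- Let H : ℝ → ℝ and S : ℝ² → ℝ be twice continuously differentiable, and suppose that for all x₁, x₂ ∈ ℝ, ∂S/∂x₁(x₁,x₂) = H'(x₁) − H'(x₂) and ∂S/∂x₂(x₁,x₂) = −(H'(x₁) − H'(x₂)). Then H'' is constant; equivalently, there exist constants q, a, c ∈ ℝ such that H(x) = ½ q x² + a x + c for all x. Hence the scalar nonlinear integrator ẋ = u, y = H'(x) admits a C² incremental storage function (i.e. is incrementally passive with C² storage) only if H is quadratic-affine. -/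
theorem eq_of_hasDerivAt_aux (f g f' : ℝ → ℝ) (hf : ∀ x, HasDerivAt f (f' x) x)
    (hg : ∀ x, HasDerivAt g (f' x) x) (x y : ℝ) : f x - g x = f y - g y := by
  have h : ∀ x, HasDerivAt (fun z => f z - g z) 0 x := fun x => by
    simpa using (hf x).fun_sub (hg x)
  exact is_const_of_deriv_eq_zero (fun x => (h x).differentiableAt) (fun x => (h x).deriv) x y

/-- If a C² function `S(x₁,x₂)` satisfies the incremental-storage PDEs
`∂S/∂x₁ = H'(x₁) − H'(x₂)` and `∂S/∂x₂ = −(H'(x₁) − H'(x₂))` for a C²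
function `H`, then `H` is quadratic-affine: `H(x) = ½ q x² + a x + c`.
Hence the scalar nonlinear integrator `ẋ = u, y = H'(x)` admits a C²
incremental storage function only if `H` is quadratic-affine. -/
theorem integrator_incrementallyPassive_implies_quadratic
    (H : ℝ → ℝ) (S : ℝ → ℝ → ℝ)
    (hH : ContDiff ℝ 2 H)
    (hS : ContDiff ℝ 2 (fun p : ℝ × ℝ => S p.1 p.2))
    (h1 : ∀ x1 x2 : ℝ, HasDerivAt (fun z => S z x2) (deriv H x1 - deriv H x2) x1)
    (h2 : ∀ x1 x2 : ℝ, HasDerivAt (fun z => S x1 z) (-(deriv H x1 - deriv H x2)) x2) :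
    ∃ q a c : ℝ, ∀ x : ℝ, H x = q * x ^ 2 / 2 + a * x + c := by
  have hd : ∀ x, HasDerivAt H (deriv H x) x := fun x =>
    ((hH.differentiable (by norm_num)) x).hasDerivAt
  have A : ∀ x y, S x y - (H x - deriv H y * x) = S 0 y - (H 0 - deriv H y * 0) := fun x y =>
    eq_of_hasDerivAt_aux (fun z => S z y) (fun z => H z - deriv H y * z)
      (fun z => deriv H z - deriv H y) (fun z => h1 z y)
      (fun z => by simpa using (hd z).fun_sub ((hasDerivAt_id z).const_mul (deriv H y))) x 0
  have B : ∀ x y, S x y - (H y - deriv H x * y) = S x 0 - (H 0 - deriv H x * 0) := fun x y =>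
    eq_of_hasDerivAt_aux (fun z => S x z) (fun z => H z - deriv H x * z)
      (fun z => -(deriv H x - deriv H z)) (fun z => h2 x z)
      (fun z => by simpa using (hd z).fun_sub ((hasDerivAt_id z).const_mul (deriv H x))) y 0
  have C : ∀ x, deriv H x = (deriv H 1 - deriv H 0) * x + deriv H 0 := fun x => by
    linarith [A x 1, B 0 1, B x 1, A x 0]
  refine ⟨deriv H 1 - deriv H 0, deriv H 0, H 0, fun x => ?_⟩
  have D := eq_of_hasDerivAt_aux H
    (fun x => (deriv H 1 - deriv H 0) * x ^ 2 / 2 + deriv H 0 * x) (deriv H) hd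
    (fun z => by
      have := ((((hasDerivAt_id z).fun_pow 2).const_mul (deriv H 1 - deriv H 0)).div_const 2).fun_add
        ((hasDerivAt_id z).const_mul (deriv H 0))
      refine this.congr_deriv ?_
      rw [C z]
      simp
      ring) x 0
  norm_num at D
  linarith
end

section
/- Let D ⊆ F_x × F_P × F_R × E_x × E_P × E_R be a Dirac structure, let R ⊆ F_R × E_R be an energy-dissipating relation (i.e. ⟨e_R, f_R⟩ ≥ 0 for all (f_R, e_R) ∈ R), and let H : F_x → ℝ be differentiable. Let x : I → F_x be differentiable on an interval I and f_P, e_P, f_R, e_R be functions on I such that for all t ∈ I, (−ẋ(t), f_P(t), −f_R(t), ∇H(x(t)), e_P(t), e_R(t)) ∈ D and (f_R(t), e_R(t)) ∈ R. Then d/dt H(x(t)) ≤ ⟨e_P(t), f_P(t)⟩ for all t ∈ I; that is, every port-Hamiltonian system is cyclo-passive. -/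
/-- Pairing on the total flow space `F_x × F_P × F_R` against the total
effort space `E_x × E_P × E_R` (sum over the three factors). -/
noncomputable def pair3 {n mP mR : ℕ}
    (e : (Fin n → ℝ) × (Fin mP → ℝ) × (Fin mR → ℝ))
    (f : (Fin n → ℝ) × (Fin mP → ℝ) × (Fin mR → ℝ)) : ℝ :=
  dot e.1 f.1 + dot e.2.1 f.2.1 + dot e.2.2 f.2.2

/-- The flow part `(f_x, f_P, f_R)` of an element
`(f_x, f_P, f_R, e_x, e_P, e_R)` of the total space. -/
def flw6 {n mP mR : ℕ}
    (p : (Fin n → ℝ) × (Fin mP → ℝ) × (Fin mR → ℝ) ×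
         (Fin n → ℝ) × (Fin mP → ℝ) × (Fin mR → ℝ)) :
    (Fin n → ℝ) × (Fin mP → ℝ) × (Fin mR → ℝ) :=
  (p.1, p.2.1, p.2.2.1)

/-- The effort part `(e_x, e_P, e_R)`. -/
def eff6 {n mP mR : ℕ}
    (p : (Fin n → ℝ) × (Fin mP → ℝ) × (Fin mR → ℝ) ×
         (Fin n → ℝ) × (Fin mP → ℝ) × (Fin mR → ℝ)) :
    (Fin n → ℝ) × (Fin mP → ℝ) × (Fin mR → ℝ) :=
  p.2.2.2

/-- The indefinite bilinear form `⟪(f₁,e₁),(f₂,e₂)⟫ = ⟨e₁,f₂⟩ + ⟨e₂,f₁⟩`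
on the total flow × effort space. -/
noncomputable def bform6 {n mP mR : ℕ}
    (p q : (Fin n → ℝ) × (Fin mP → ℝ) × (Fin mR → ℝ) ×
           (Fin n → ℝ) × (Fin mP → ℝ) × (Fin mR → ℝ)) : ℝ :=
  pair3 (eff6 p) (flw6 q) + pair3 (eff6 q) (flw6 p)

/-- A Dirac structure on `F_x × F_P × F_R × E_x × E_P × E_R`: a subspace
equal to its orthogonal companion. -/
def IsDirac6 {n mP mR : ℕ}
    (D : Set ((Fin n → ℝ) × (Fin mP → ℝ) × (Fin mR → ℝ) ×
              (Fin n → ℝ) × (Fin mP → ℝ) × (Fin mR → ℝ))) : Prop :=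
  (∃ W : Submodule ℝ ((Fin n → ℝ) × (Fin mP → ℝ) × (Fin mR → ℝ) ×
              (Fin n → ℝ) × (Fin mP → ℝ) × (Fin mR → ℝ)), D = ↑W) ∧
  D = {p | ∀ q ∈ D, bform6 p q = 0}

/-- Every port-Hamiltonian system is cyclo-passive: along trajectories,
`d/dt H(x(t)) ≤ ⟨e_P(t), f_P(t)⟩`. -/
theorem portHamiltonian_cycloPassive {n mP mR : ℕ}
    (D : Set ((Fin n → ℝ) × (Fin mP → ℝ) × (Fin mR → ℝ) ×
              (Fin n → ℝ) × (Fin mP → ℝ) × (Fin mR → ℝ)))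
    (hD : IsDirac6 D)
    (R : Set ((Fin mR → ℝ) × (Fin mR → ℝ)))
    (hR : ∀ p ∈ R, 0 ≤ dot p.2 p.1)
    (H : (Fin n → ℝ) → ℝ) (gradH : (Fin n → ℝ) → Fin n → ℝ)
    (hdiff : Differentiable ℝ H)
    (hgrad : ∀ p v, (fderiv ℝ H p) v = dot (gradH p) v)
    (I : Set ℝ) (x x' : ℝ → Fin n → ℝ)
    (fP eP : ℝ → Fin mP → ℝ) (fR eR : ℝ → Fin mR → ℝ)
    (hx : ∀ t ∈ I, HasDerivAt x (x' t) t)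
    (hmem : ∀ t ∈ I, (-(x' t), fP t, -(fR t), gradH (x t), eP t, eR t) ∈ D)
    (hRmem : ∀ t ∈ I, (fR t, eR t) ∈ R) :
    ∀ t ∈ I,
      HasDerivAt (fun τ => H (x τ)) (dot (gradH (x t)) (x' t)) t ∧
      dot (gradH (x t)) (x' t) ≤ dot (eP t) (fP t) := by
  intro t ht
  constructor
  · have h := (hdiff (x t)).hasFDerivAt.comp_hasDerivAt t (hx t ht)
    rw [hgrad] at h
    exact h
  · have hm := hmem t ht
    have h2 := hm
    rw [hD.2] at h2
    have h0 := h2 _ hm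
    have hr := hR _ (hRmem t ht)
    have neg : ∀ {k : ℕ} (e f : Fin k → ℝ), dot e (-f) = - dot e f := by
      intro k e f
      simp [dot]
    simp only [bform6, pair3, eff6, flw6, neg] at h0
    simp only at hr
    linarith
end
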